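/- Let R be a probability-measure-preserving countable equivalence relation on a standard probability space (X,μ). If two measurable sets A and B have the same R-conditional measure (i.e. the conditional expectations of their indicator functions with respect to the σ-algebra of R-invariant sets agree almost everywhere), then there exists a partial isomorphism φ in the pseudo full group [[R]] with domain A and range B. -/

import Mathlib

open MeasureTheory

/-- The σ-algebra of `R`-invariant measurable sets. -/
def invariantAlgebra {X : Type*} [MeasurableSpace X] (R : X → X → Prop) :
    MeasurableSpace X where
  MeasurableSet' s := MeasurableSet s ∧ ∀ ⦃x y⦄, R x y → (x ∈ s ↔ y ∈ s)
  measurableSet_empty := ⟨MeasurableSet.empty, by simp⟩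
  measurableSet_compl := fun s hs =>
    ⟨hs.1.compl, fun x y h => by simp [Set.mem_compl_iff, hs.2 h]⟩
  measurableSet_iUnion := fun f hf =>
    ⟨MeasurableSet.iUnion fun i => (hf i).1, fun x y h => by
      simp only [Set.mem_iUnion]; exact exists_congr fun i => (hf i).2 h⟩

/-- The `R`-conditional measure of a set: the conditional expectation of its indicator
function with respect to the σ-algebra of `R`-invariant sets. -/
noncomputable def condMeasure {X : Type*} [MeasurableSpace X] (μ : Measure X)
    (R : X → X → Prop) (A : Set X) : X → ℝ :=
  μ[A.indicator (fun _ => (1 : ℝ)) | invariantAlgebra R]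

/-- Pull back `C` along the composition of the maps `T i`, for `i` in a list. -/
def pullList {X : Type*} (T : ℕ → Equiv.Perm X) (C : Set X) : List ℕ → Set X
  | [] => C
  | j :: l => T j ⁻¹' pullList T C l

/-- Indistinguishability by the sets generated from `C`. -/
def Indist {X : Type*} (T : ℕ → Equiv.Perm X) (C : Set X) (x y : X) : Prop :=
  ∀ l, x ∈ pullList T C l ↔ y ∈ pullList T C l

lemma Indist.map {X : Type*} {T : ℕ → Equiv.Perm X} {C : Set X} {x y : X}
    (h : Indist T C x y) (j : ℕ) : Indist T C (T j x) (T j y) := fun l => h (j :: l)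

lemma Indist.symm' {X : Type*} {T : ℕ → Equiv.Perm X} {C : Set X} {x y : X}
    (h : Indist T C x y) : Indist T C y x := fun l => (h l).symm

lemma Indist.trans' {X : Type*} {T : ℕ → Equiv.Perm X} {C : Set X} {x y z : X}
    (h : Indist T C x y) (h' : Indist T C y z) : Indist T C x z :=
  fun l => (h l).trans (h' l)

lemma measurableSet_pullList {X : Type*} [MeasurableSpace X] (T : ℕ → Equiv.Perm X)
    (hT : ∀ n, Measurable (T n)) (C : Set X) (hC : MeasurableSet C) (l : List ℕ) :
    MeasurableSet (pullList T C l) := by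
  induction l with
  | nil => exact hC
  | cons j l ih => exact hT j ih

lemma measurableSet_indist {X : Type*} [MeasurableSpace X] (T : ℕ → Equiv.Perm X)
    (hT : ∀ n, Measurable (T n)) (C : Set X) (hC : MeasurableSet C) (n m : ℕ) :
    MeasurableSet {w | Indist T C (T n (T m w)) w} := by
  have : {w | Indist T C (T n (T m w)) w} =
      ⋂ l, {w | w ∈ pullList T C (m :: n :: l) ↔ w ∈ pullList T C l} := by
    ext w; simp only [Set.mem_setOf_eq, Set.mem_iInter]; rfl
  rw [this]
  refine MeasurableSet.iInter fun l => ?_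
  exact MeasurableSet.iff (measurableSet_pullList T hT C hC _) (measurableSet_pullList T hT C hC _)

lemma exists_measurable_image {X : Type*} [MeasurableSpace X]
    (μ : Measure X) [IsProbabilityMeasure μ] (T : ℕ → Equiv.Perm X)
    (hT : ∀ n, MeasurePreserving (T n) μ μ)
    (hinv : ∀ n y, ∃ m, T m (T n y) = y) (n : ℕ) (C : Set X) (hC : MeasurableSet C) :
    ∃ D, MeasurableSet D ∧ T n ⁻¹' D ⊆ C ∧ μ (C \ T n ⁻¹' D) = 0 := by
  have hTm : ∀ n, Measurable (T n) := fun n => (hT n).measurable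
  have hI := measurableSet_indist T hTm C hC n
  have hP := measurableSet_pullList T hTm C hC
  let V : ℕ → ℕ → List ℕ → Set X := fun m m' l =>
    {w | Indist T C (T n (T m w)) w} ∩ {w | Indist T C (T n (T m' w)) w} ∩
      (T m ⁻¹' pullList T C l ∩ T m' ⁻¹' (pullList T C l)ᶜ)
  have hVm : ∀ m m' l, MeasurableSet (V m m' l) := fun m m' l =>
    ((hI m).inter (hI m')).inter ((hTm m (hP l)).inter (hTm m' (hP l).compl))
  have hVsat : ∀ m m' l v w, Indist T C w v → v ∈ V m m' l → w ∈ V m m' l := by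
    rintro m m' l v w h ⟨⟨h1, h2⟩, h3, h4⟩
    refine ⟨⟨?_, ?_⟩, ?_, ?_⟩
    · exact (((h.map m).map n).trans' h1).trans' h.symm'
    · exact (((h.map m').map n).trans' h2).trans' h.symm'
    · exact (h.map m l).2 h3
    · exact fun h5 => h4 ((h.map m' l).1 h5)
  have hV0 : ∀ m m' l, μ (V m m' l) = 0 := by
    intro m m' l
    have e1 : μ (V m m' l) ≤ μ (T n ⁻¹' V m m' l ∩ pullList T C l) := by
      rw [← (hT m).measure_preimage ((hTm n (hVm m m' l)).inter (hP l)).nullMeasurableSet]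
      refine measure_mono fun v hv => ⟨?_, hv.2.1⟩
      exact hVsat _ _ _ _ _ hv.1.1 hv
    have e2 : μ (V m m' l) ≤ μ (T n ⁻¹' V m m' l \ pullList T C l) := by
      rw [← (hT m').measure_preimage ((hTm n (hVm m m' l)).diff (hP l)).nullMeasurableSet]
      refine measure_mono fun v hv => ⟨?_, hv.2.2⟩
      exact hVsat _ _ _ _ _ hv.1.2 hv
    have e3 := measure_inter_add_diff (μ := μ) (T n ⁻¹' V m m' l) (hP l)
    rw [(hT n).measure_preimage (hVm m m' l).nullMeasurableSet] at e3
    have e4 : μ (V m m' l) + μ (V m m' l) ≤ μ (V m m' l) + 0 := by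
      rw [add_zero]
      exact (add_le_add e1 e2).trans e3.le
    exact le_antisymm ((ENNReal.add_le_add_iff_left (measure_ne_top μ _)).1 e4) bot_le
  let W : Set X := ⋃ m, ⋃ m', ⋃ l, V m m' l
  have hWm : MeasurableSet W :=
    MeasurableSet.iUnion fun m => MeasurableSet.iUnion fun m' => MeasurableSet.iUnion fun l =>
      hVm m m' l
  have hW0 : μ W = 0 := by
    simp only [W, measure_iUnion_null_iff]; exact hV0
  refine ⟨(⋃ m, {w | Indist T C (T n (T m w)) w} ∩ T m ⁻¹' C) \ W, ?_, ?_, ?_⟩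
  · exact (MeasurableSet.iUnion fun m => (hI m).inter (hTm m hC)).diff hWm
  · rintro y ⟨h1, h2⟩
    obtain ⟨m, h3, h4⟩ := Set.mem_iUnion.1 h1
    obtain ⟨m', h5⟩ := hinv n y
    by_contra hy
    refine h2 (Set.mem_iUnion.2 ⟨m, Set.mem_iUnion.2 ⟨m', Set.mem_iUnion.2 ⟨[], ⟨h3, ?_⟩, h4, ?_⟩⟩⟩)
    · change Indist T C (T n (T m' (T n y))) (T n y)
      rw [h5]; exact fun l => Iff.rfl
    · change T m' (T n y) ∉ C
      rwa [h5]
  · refine measure_mono_null (t := T n ⁻¹' W) ?_ ?_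
    · rintro y ⟨hy, h⟩
      by_contra hw
      obtain ⟨m', h5⟩ := hinv n y
      refine h ⟨Set.mem_iUnion.2 ⟨m', ?_, ?_⟩, hw⟩
      · change Indist T C (T n (T m' (T n y))) (T n y)
        rw [h5]; exact fun l => Iff.rfl
      · change T m' (T n y) ∈ C
        rwa [h5]
    · rw [(hT n).measure_preimage hWm.nullMeasurableSet, hW0]

lemma measure_inter_of_condMeasure {X : Type*} [MeasurableSpace X]
    (μ : Measure X) [IsProbabilityMeasure μ] (R : X → X → Prop)
    (A B : Set X) (hA : MeasurableSet A) (hB : MeasurableSet B)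
    (hAB : condMeasure μ R A =ᵐ[μ] condMeasure μ R B) (S : Set X) (hS : MeasurableSet S)
    (hSR : ∀ ⦃x y⦄, R x y → (x ∈ S ↔ y ∈ S)) : μ (A ∩ S) = μ (B ∩ S) := by
  have hm : invariantAlgebra R ≤ ‹MeasurableSpace X› := fun s hs => hs.1
  have hS' : MeasurableSet[invariantAlgebra R] S := ⟨hS, hSR⟩
  have key : ∀ E : Set X, MeasurableSet E →
      ∫ x in S, condMeasure μ R E x ∂μ = μ.real (E ∩ S) := by
    intro E hE
    unfold condMeasure
    rw [setIntegral_condExp hm ((integrable_const (1 : ℝ)).indicator hE) hS',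
      integral_indicator hE]
    simp [Measure.restrict_restrict hE]
  have h : μ.real (A ∩ S) = μ.real (B ∩ S) := by
    rw [← key A hA, ← key B hB]
    exact integral_congr_ae (ae_restrict_of_ae hAB)
  exact (measureReal_eq_measureReal_iff).1 h

/-- If two measurable sets have the same `R`-conditional measure, there is a partial
isomorphism in the pseudo full group `[[R]]` with domain `A` and range `B` (mod null sets). -/
theorem pseudo_full_group_transitive {X : Type*} [MeasurableSpace X]
    (μ : Measure X) [IsProbabilityMeasure μ] (R : X → X → Prop) (hR : Equivalence R)
    (hFM : ∃ T : ℕ → Equiv.Perm X, (∀ n, MeasurePreserving (T n) μ μ) ∧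
      ∀ x y, R x y ↔ ∃ n, T n x = y)
    (A B : Set X) (hA : MeasurableSet A) (hB : MeasurableSet B)
    (hAB : condMeasure μ R A =ᵐ[μ] condMeasure μ R B) :
    ∃ (φ : X → X) (A' B' : Set X), A' ⊆ A ∧ B' ⊆ B ∧ μ (A \ A') = 0 ∧ μ (B \ B') = 0 ∧
      MeasurableSet A' ∧ MeasurableSet B' ∧ Set.BijOn φ A' B' ∧
      (∀ x ∈ A', R x (φ x)) ∧
      (∀ s ⊆ A', MeasurableSet s → MeasurableSet (φ '' s) ∧ μ (φ '' s) = μ s) := by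
  classical
  obtain ⟨T, hT, hRT⟩ := hFM
  have hTm : ∀ n, Measurable (T n) := fun n => (hT n).measurable
  have hinv : ∀ n y, ∃ m, T m (T n y) = y := fun n y =>
    (hRT _ _).1 (hR.symm ((hRT _ _).2 ⟨n, rfl⟩))
  have hex : ∀ n C, ∃ D, MeasurableSet C →
      MeasurableSet D ∧ T n ⁻¹' D ⊆ C ∧ μ (C \ T n ⁻¹' D) = 0 := by
    intro n C
    by_cases hC : MeasurableSet C
    · obtain ⟨D, hD⟩ := exists_measurable_image μ T hT hinv n C hC
      exact ⟨D, fun _ => hD⟩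
    · exact ⟨∅, fun h => absurd h hC⟩
  choose f hf using hex
  let E : ℕ → Set X × Set X → Set X := fun n p => f n (p.2 ∩ T n ⁻¹' p.1) ∩ p.1
  let P : ℕ → Set X × Set X := fun n =>
    Nat.rec (A, B) (fun n p => (p.1 \ E n p, p.2 \ T n ⁻¹' E n p)) n
  let D : ℕ → Set X := fun n => E n (P n)
  have hP1 : ∀ n, (P (n + 1)).1 = (P n).1 \ D n := fun n => rfl
  have hP2 : ∀ n, (P (n + 1)).2 = (P n).2 \ T n ⁻¹' D n := fun n => rfl
  have hPm : ∀ n, MeasurableSet (P n).1 ∧ MeasurableSet (P n).2 := by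
    intro n
    induction n with
    | zero => exact ⟨hA, hB⟩
    | succ n ih =>
      have hD : MeasurableSet (D n) :=
        (hf n _ (ih.2.inter (hTm n ih.1))).1.inter ih.1
      rw [hP1, hP2]
      exact ⟨ih.1.diff hD, ih.2.diff (hTm n hD)⟩
  have hfn := fun n => hf n _ ((hPm n).2.inter (hTm n (hPm n).1))
  have hDm : ∀ n, MeasurableSet (D n) := fun n => (hfn n).1.inter (hPm n).1
  have hD1 : ∀ n, D n ⊆ (P n).1 := fun n => Set.inter_subset_right
  have hD2 : ∀ n, T n ⁻¹' D n ⊆ (P n).2 := fun n x hx => ((hfn n).2.1 hx.1).1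
  have hD0 : ∀ n, μ (((P n).2 ∩ T n ⁻¹' (P n).1) \ T n ⁻¹' D n) = 0 := by
    intro n
    refine measure_mono_null ?_ (hfn n).2.2
    rintro x ⟨h1, h2⟩
    exact ⟨h1, fun h3 => h2 ⟨h3, h1.2⟩⟩
  have hanti1 : Antitone fun n => (P n).1 := antitone_nat_of_succ_le fun n => by
    rw [hP1]; exact Set.diff_subset
  have hanti2 : Antitone fun n => (P n).2 := antitone_nat_of_succ_le fun n => by
    rw [hP2]; exact Set.diff_subset
  have hdis1 : Pairwise (Function.onFun Disjoint D) := by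
    refine (pairwise_disjoint_on D).2 fun m n hmn => ?_
    refine Set.disjoint_left.2 fun x hx hx' => ?_
    have h := hanti1 (Nat.succ_le_of_lt hmn) (hD1 n hx')
    exact h.2 hx
  have hdis2 : Pairwise (Function.onFun Disjoint fun n => T n ⁻¹' D n) := by
    refine (pairwise_disjoint_on _).2 fun m n hmn => ?_
    refine Set.disjoint_left.2 fun x hx hx' => ?_
    have h := hanti2 (Nat.succ_le_of_lt hmn) (hD2 n hx')
    exact h.2 hx
  have hA'A : (⋃ n, D n) ⊆ A :=
    Set.iUnion_subset fun n => (hD1 n).trans (hanti1 (Nat.zero_le n))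
  have hB'B : (⋃ n, T n ⁻¹' D n) ⊆ B :=
    Set.iUnion_subset fun n => (hD2 n).trans (hanti2 (Nat.zero_le n))
  have hA'm : MeasurableSet (⋃ n, D n) := MeasurableSet.iUnion hDm
  have hB'm : MeasurableSet (⋃ n, T n ⁻¹' D n) := MeasurableSet.iUnion fun n => hTm n (hDm n)
  have hAinf : ∀ x ∈ A \ ⋃ n, D n, ∀ n, x ∈ (P n).1 := by
    rintro x ⟨hx, hx'⟩ n
    induction n with
    | zero => exact hx
    | succ n ih => exact ⟨ih, fun h => hx' (Set.mem_iUnion.2 ⟨n, h⟩)⟩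
  have hBinf : ∀ x ∈ B \ ⋃ n, T n ⁻¹' D n, ∀ n, x ∈ (P n).2 := by
    rintro x ⟨hx, hx'⟩ n
    induction n with
    | zero => exact hx
    | succ n ih => exact ⟨ih, fun h => hx' (Set.mem_iUnion.2 ⟨n, h⟩)⟩
  -- the leftovers have the same conditional measure
  have hleft : ∀ S : Set X, MeasurableSet S → (∀ ⦃x y⦄, R x y → (x ∈ S ↔ y ∈ S)) →
      μ ((A \ ⋃ n, D n) ∩ S) = μ ((B \ ⋃ n, T n ⁻¹' D n) ∩ S) := by
    intro S hS hSR
    have h1 := measure_inter_of_condMeasure μ R A B hA hB hAB S hS hSR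
    have h2 : μ ((⋃ n, D n) ∩ S) = μ ((⋃ n, T n ⁻¹' D n) ∩ S) := by
      rw [Set.iUnion_inter, Set.iUnion_inter, measure_iUnion, measure_iUnion]
      · refine tsum_congr fun n => ?_
        rw [← (hT n).measure_preimage ((hDm n).inter hS).nullMeasurableSet]
        congr 1
        ext x
        have := hSR ((hRT x (T n x)).2 ⟨n, rfl⟩)
        simp [this]
      · exact fun i j hij => (hdis2 hij).mono Set.inter_subset_left Set.inter_subset_left
      · exact fun n => (hTm n (hDm n)).inter hS
      · exact fun i j hij => (hdis1 hij).mono Set.inter_subset_left Set.inter_subset_left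
      · exact fun n => (hDm n).inter hS
    have h3 : ∀ U U' : Set X, U' ⊆ U → MeasurableSet U' →
        μ (U ∩ S) = μ (U' ∩ S) + μ ((U \ U') ∩ S) := by
      intro U U' hU hU'
      rw [← measure_inter_add_diff (U ∩ S) hU']
      congr 2
      · ext x; constructor
        · rintro ⟨⟨_, h⟩, h'⟩; exact ⟨h', h⟩
        · rintro ⟨h', h⟩; exact ⟨⟨hU h', h⟩, h'⟩
      · ext x; constructor
        · rintro ⟨⟨a, h⟩, h'⟩; exact ⟨⟨a, h'⟩, h⟩
        · rintro ⟨⟨a, h'⟩, h⟩; exact ⟨⟨a, h⟩, h'⟩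
    rw [h3 A _ hA'A hA'm, h3 B _ hB'B hB'm, h2] at h1
    exact (ENNReal.add_right_inj (measure_ne_top μ _)).1 h1
  have hAA0 : μ (A \ ⋃ n, D n) = 0 := by
    let S : Set X := ⋃ n, T n ⁻¹' (A \ ⋃ n, D n)
    have hSm : MeasurableSet S := MeasurableSet.iUnion fun n => hTm n (hA.diff hA'm)
    have hSmem : ∀ x, x ∈ S ↔ ∃ y ∈ A \ ⋃ n, D n, R x y := by
      intro x
      simp only [S, Set.mem_iUnion]
      constructor
      · rintro ⟨n, hn⟩; exact ⟨T n x, hn, (hRT _ _).2 ⟨n, rfl⟩⟩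
      · rintro ⟨y, hy, hxy⟩
        obtain ⟨n, rfl⟩ := (hRT _ _).1 hxy
        exact ⟨n, hy⟩
    have hSR : ∀ ⦃x y⦄, R x y → (x ∈ S ↔ y ∈ S) := by
      intro x y hxy
      rw [hSmem, hSmem]
      exact ⟨fun ⟨z, hz, h⟩ => ⟨z, hz, hR.trans (hR.symm hxy) h⟩,
        fun ⟨z, hz, h⟩ => ⟨z, hz, hR.trans hxy h⟩⟩
    have h := hleft S hSm hSR
    rw [Set.inter_eq_left.2 fun x hx => (hSmem x).2 ⟨x, hx, hR.refl x⟩] at h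
    rw [h, Set.inter_iUnion, measure_iUnion_null_iff]
    intro n
    refine measure_mono_null ?_ (hD0 n)
    rintro x ⟨h1, h2⟩
    exact ⟨⟨hBinf x h1 n, hAinf _ h2 n⟩, fun h3 => h1.2 (Set.mem_iUnion.2 ⟨n, h3⟩)⟩
  have hBB0 : μ (B \ ⋃ n, T n ⁻¹' D n) = 0 := by
    have h := hleft Set.univ MeasurableSet.univ (fun x y _ => by simp)
    rw [Set.inter_univ, Set.inter_univ] at h
    rw [← h, hAA0]
  let φ : X → X := fun x => if h : ∃ n, x ∈ D n then (T (Nat.find h)).symm x else x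
  have hφ : ∀ n x, x ∈ D n → φ x = (T n).symm x := by
    intro n x hx
    have h : ∃ n, x ∈ D n := ⟨n, hx⟩
    have h1 : Nat.find h = n := by
      by_contra hne
      exact Set.disjoint_left.1 (hdis1 hne) (Nat.find_spec h) hx
    simp only [φ, dif_pos h, h1]
  have himg : ∀ s ⊆ ⋃ n, D n, φ '' s = ⋃ n, T n ⁻¹' (s ∩ D n) := by
    intro s hs
    ext y
    simp only [Set.mem_image, Set.mem_iUnion, Set.mem_preimage]
    constructor
    · rintro ⟨x, hx, rfl⟩
      obtain ⟨n, hn⟩ := Set.mem_iUnion.1 (hs hx)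
      refine ⟨n, ?_⟩
      rw [hφ n x hn, Equiv.apply_symm_apply]
      exact ⟨hx, hn⟩
    · rintro ⟨n, h1, h2⟩
      exact ⟨T n y, h1, by rw [hφ n _ h2, Equiv.symm_apply_apply]⟩
  refine ⟨φ, ⋃ n, D n, ⋃ n, T n ⁻¹' D n, hA'A, hB'B, hAA0, hBB0, hA'm, hB'm, ⟨?_, ?_, ?_⟩, ?_, ?_⟩
  · intro x hx
    obtain ⟨n, hn⟩ := Set.mem_iUnion.1 hx
    refine Set.mem_iUnion.2 ⟨n, ?_⟩
    rw [hφ n x hn, Set.mem_preimage, Equiv.apply_symm_apply]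
    exact hn
  · intro x hx y hy hxy
    obtain ⟨n, hn⟩ := Set.mem_iUnion.1 hx
    obtain ⟨m, hm⟩ := Set.mem_iUnion.1 hy
    rw [hφ n x hn, hφ m y hm] at hxy
    have hnm : n = m := by
      by_contra hne
      have hd : Disjoint (T n ⁻¹' D n) (T m ⁻¹' D m) := hdis2 hne
      refine Set.disjoint_left.1 hd (?_ : (T n).symm x ∈ _) ?_
      · rw [Set.mem_preimage, Equiv.apply_symm_apply]; exact hn
      · rw [hxy, Set.mem_preimage, Equiv.apply_symm_apply]; exact hm
    subst hnm
    exact (T n).symm.injective hxy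
  · intro y hy
    rw [himg _ subset_rfl]
    obtain ⟨n, hn⟩ := Set.mem_iUnion.1 hy
    exact Set.mem_iUnion.2 ⟨n, Set.mem_iUnion.2 ⟨n, hn⟩, hn⟩
  · intro x hx
    obtain ⟨n, hn⟩ := Set.mem_iUnion.1 hx
    rw [hφ n x hn]
    exact hR.symm ((hRT _ _).2 ⟨n, Equiv.apply_symm_apply _ _⟩)
  · intro s hs hsm
    rw [himg s hs]
    refine ⟨MeasurableSet.iUnion fun n => hTm n (hsm.inter (hDm n)), ?_⟩
    rw [measure_iUnion]
    · have h1 : s = ⋃ n, s ∩ D n := by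
        rw [← Set.inter_iUnion, Set.inter_eq_left.2 hs]
      conv_rhs => rw [h1]
      rw [measure_iUnion]
      · exact tsum_congr fun n =>
          (hT n).measure_preimage (hsm.inter (hDm n)).nullMeasurableSet
      · exact fun i j hij => (hdis1 hij).mono Set.inter_subset_right Set.inter_subset_right
      · exact fun n => hsm.inter (hDm n)
    · exact fun i j hij => (hdis2 hij).mono
        (Set.preimage_mono Set.inter_subset_right) (Set.preimage_mono Set.inter_subset_right)
    · exact fun n => hTm n (hsm.inter (hDm n))
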